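/- arXiv:2406.18383 — 2 statements merged into one kernel-verified Lean document; each statement's English description precedes it below -/
import Mathlib

section
/- For every real α with 0 ≤ α ≤ 1/2 there exists x ∈ B^ℕ such that γ̲(x) = γ̄(x) = β̲(x) = β̄(x) = α and h̲(x) = h̄(x) = H(α). -/
open Filter Topology

/-- The factor of length `len` of the sequence `x` starting at position `i`. -/
def factor (x : ℕ → Bool) (i len : ℕ) : List Bool :=
  List.ofFn (fun j : Fin len => x (i + j))

/-- Number of (possibly overlapping) occurrences of the word `u`
in the prefix `x[0:n)` of the sequence `x`. -/
def occ (x : ℕ → Bool) (n : ℕ) (u : List Bool) : ℕ :=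
  ((Finset.range (n + 1 - u.length)).filter (fun i => factor x i u.length = u)).card

/-- Non-aligned `ℓ`-block entropy of the prefix `x[0:n)`
(logs are base 2, with the convention `0 · log 0 = 0`). -/
noncomputable def hBlock (ℓ : ℕ) (x : ℕ → Bool) (n : ℕ) : ℝ :=
  -(1 / (ℓ : ℝ)) * ∑ u : Fin ℓ → Bool,
    ((occ x n (List.ofFn u) : ℝ) / ((n : ℝ) - ℓ + 1)) *
      Real.logb 2 ((occ x n (List.ofFn u) : ℝ) / ((n : ℝ) - ℓ + 1))

/-- `h̲(x) = lim_{ℓ→∞} liminf_{n→∞} h_ℓ(x[0:n))` (the limit in `ℓ` exists). -/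
noncomputable def hLow (x : ℕ → Bool) : ℝ :=
  atTop.liminf fun ℓ => atTop.liminf fun n => hBlock ℓ x n

/-- `h̄(x) = lim_{ℓ→∞} limsup_{n→∞} h_ℓ(x[0:n))` (the limit in `ℓ` exists). -/
noncomputable def hUp (x : ℕ → Bool) : ℝ :=
  atTop.limsup fun ℓ => atTop.limsup fun n => hBlock ℓ x n

/-- `γ_ℓ(x[0:n))`: normalized minimal number of prediction errors when predicting
`x[i]` from the preceding `ℓ` symbols `x[i-ℓ:i)`, for `i ∈ {ℓ,…,n-1}`. -/
noncomputable def gammaWord (ℓ : ℕ) (x : ℕ → Bool) (n : ℕ) : ℝ :=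
  (1 / ((n : ℝ) - ℓ)) *
    ((Finset.univ : Finset ((Fin ℓ → Bool) → Bool)).inf' Finset.univ_nonempty
      (fun f => ((((Finset.Ico ℓ n).filter
        (fun i => x i ≠ f (fun j => x (i - ℓ + j)))).card : ℝ))))

/-- `β_ℓ(x[0:n))`: normalized minimal number of prediction errors when predicting
`x[i]` from the following `ℓ` symbols `x[i+1:i+ℓ+1)`, for `i ∈ {0,…,n-ℓ-1}`. -/
noncomputable def betaWord (ℓ : ℕ) (x : ℕ → Bool) (n : ℕ) : ℝ :=
  (1 / ((n : ℝ) - ℓ)) *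
    ((Finset.univ : Finset ((Fin ℓ → Bool) → Bool)).inf' Finset.univ_nonempty
      (fun f => ((((Finset.range (n - ℓ)).filter
        (fun i => x i ≠ f (fun j => x (i + 1 + j)))).card : ℝ))))

/-- `γ̲(x) = lim_{ℓ→∞} liminf_{n→∞} γ_ℓ(x[0:n))` (the limit in `ℓ` exists, by monotonicity). -/
noncomputable def gammaLow (x : ℕ → Bool) : ℝ :=
  atTop.liminf fun ℓ => atTop.liminf fun n => gammaWord ℓ x n

/-- `γ̄(x) = lim_{ℓ→∞} limsup_{n→∞} γ_ℓ(x[0:n))` (the limit in `ℓ` exists, by monotonicity). -/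
noncomputable def gammaUp (x : ℕ → Bool) : ℝ :=
  atTop.limsup fun ℓ => atTop.limsup fun n => gammaWord ℓ x n

/-- `β̲(x) = lim_{ℓ→∞} liminf_{n→∞} β_ℓ(x[0:n))` (the limit in `ℓ` exists, by monotonicity). -/
noncomputable def betaLow (x : ℕ → Bool) : ℝ :=
  atTop.liminf fun ℓ => atTop.liminf fun n => betaWord ℓ x n

/-- `β̄(x) = lim_{ℓ→∞} limsup_{n→∞} β_ℓ(x[0:n))` (the limit in `ℓ` exists, by monotonicity). -/
noncomputable def betaUp (x : ℕ → Bool) : ℝ :=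
  atTop.limsup fun ℓ => atTop.limsup fun n => betaWord ℓ x n

/-- Binary Shannon entropy function `H(α) = -α log α - (1-α) log (1-α)` (base-2 logs). -/
noncomputable def binEntropy (a : ℝ) : ℝ :=
  -(a * Real.logb 2 a) - (1 - a) * Real.logb 2 (1 - a)

/-- Conditional block entropy `Hc^{n,ℓ}(x)`:
`-Σ_{ā ∈ B^ℓ, a ∈ B, p(ā·a) > 0} p(ā·a) · log (p(ā·a)/p(ā))`, where
`p(ā) = occ(x[0:n-1), ā)/(n-ℓ)` and `p(ā·a) = occ(x[0:n), ā·a)/(n-ℓ)`. -/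
noncomputable def condEntropy (ℓ : ℕ) (x : ℕ → Bool) (n : ℕ) : ℝ :=
  -∑ u : Fin ℓ → Bool, ∑ a : Bool,
    (if 0 < ((occ x n (List.ofFn u ++ [a]) : ℝ) / ((n : ℝ) - ℓ)) then
      ((occ x n (List.ofFn u ++ [a]) : ℝ) / ((n : ℝ) - ℓ)) *
        Real.logb 2 (((occ x n (List.ofFn u ++ [a]) : ℝ) / ((n : ℝ) - ℓ)) /
          ((occ x (n - 1) (List.ofFn u) : ℝ) / ((n : ℝ) - ℓ)))
    else 0)

/-- The real number in `[0,1]` denoted by the binary sequence `x`. -/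
noncomputable def val (x : ℕ → Bool) : ℝ :=
  ∑' n : ℕ, (if x n then (1 : ℝ) else 0) / 2 ^ (n + 1)

/-!
Almost every sequence of independent letters with law `μ` is generic: each finite word `u` occurs
with frequency `∏ j, μ {u j}`. This follows from the strong law of large numbers, because windows of
length `m` starting in a fixed residue class modulo a number larger than `m` are independent. In a
generic sequence, the letters of a window carry no asymptotic information about one another, so no
rule predicting a letter from its neighbours does better than always guessing the most likely
letter; and the entropy of a product law on words is additive. For the Bernoulli law with
`μ {1} = α ≤ 1/2` the two quantities are `α` and `H(α)`.
-/

open Finset MeasureTheory ProbabilityTheory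

section Averages

variable {m : ℕ}

theorem sum_range_eq_sum_residues {M : Type*} [AddCommMonoid M] (hm : 0 < m) (Y : ℕ → M) (n : ℕ) :
    ∑ i ∈ range n, Y i = ∑ r ∈ range m, ∑ k ∈ range ((n + (m - 1 - r)) / m), Y (r + k * m) := by
  have mem_iff {r k : ℕ} (hr : r < m) : k < (n + (m - 1 - r)) / m ↔ r + k * m < n := by
    rw [← Nat.succ_le_iff, Nat.le_div_iff_mul_le hm, Nat.succ_mul]
    omega
  rw [Finset.sum_sigma']
  refine Finset.sum_nbij' (fun i => ⟨i % m, i / m⟩) (fun s => s.1 + s.2 * m) ?_ ?_ ?_ ?_ ?_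
  · intro i hi
    simpa [Nat.mod_lt i hm, mem_iff (Nat.mod_lt i hm), Nat.mod_add_div'] using hi
  · rintro ⟨r, k⟩ hrk
    simp only [mem_sigma, mem_range] at hrk ⊢
    exact (mem_iff hrk.1).1 hrk.2
  · simp [Nat.mod_add_div']
  · rintro ⟨r, k⟩ hrk
    have hr : r < m := by simpa using (mem_sigma.1 hrk).1
    simp [Nat.mod_eq_of_lt hr, Nat.add_mul_div_right _ _ hm, Nat.div_eq_of_lt hr]
  · simp [Nat.mod_add_div']

theorem tendsto_add_div_div_atTop (c m : ℕ) :
    Tendsto (fun n : ℕ => (((n + c) / m : ℕ) : ℝ) / n) atTop (𝓝 (m : ℝ)⁻¹) := by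
  have hfloor : Tendsto (fun n : ℕ => (((n + c) / m : ℕ) : ℝ) / (n + c : ℕ)) atTop
      (𝓝 (m : ℝ)⁻¹) := by
    refine ((tendsto_nat_floor_mul_div_atTop (inv_nonneg.2 m.cast_nonneg)).comp
      (tendsto_natCast_atTop_atTop.comp (tendsto_add_atTop_nat c))).congr fun n => ?_
    simp only [Function.comp_apply, ← Nat.floor_div_eq_div (K := ℝ), div_eq_inv_mul]
  have hshift : Tendsto (fun n : ℕ => ((n + c : ℕ) : ℝ) / n) atTop (𝓝 1) := by
    simpa [add_comm] using tendsto_add_mul_div_add_mul_atTop_nhds (𝕜 := ℝ) c 0 1 one_ne_zero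
  rw [← mul_one (m : ℝ)⁻¹]
  refine (hfloor.mul hshift).congr' ?_
  filter_upwards [eventually_gt_atTop 0] with n hn
  have : ((n + c : ℕ) : ℝ) ≠ 0 := by positivity
  field_simp

theorem tendsto_average_of_residues {E : Type*} [AddCommGroup E] [Module ℝ E] [TopologicalSpace E]
    [ContinuousAdd E] [ContinuousSMul ℝ E] (hm : 0 < m) {Y y : ℕ → E}
    (hY : ∀ r < m, Tendsto (fun k : ℕ => (k : ℝ)⁻¹ • ∑ i ∈ range k, Y (r + i * m)) atTop
      (𝓝 (y r))) :
    Tendsto (fun n : ℕ => (n : ℝ)⁻¹ • ∑ i ∈ range n, Y i) atTop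
      (𝓝 ((m : ℝ)⁻¹ • ∑ r ∈ range m, y r)) := by
  let count (r n : ℕ) : ℕ := (n + (m - 1 - r)) / m
  have hcount (r : ℕ) : Tendsto (count r) atTop atTop :=
    (Nat.tendsto_div_const_atTop hm.ne').comp (tendsto_add_atTop_nat _)
  rw [Finset.smul_sum]
  refine (tendsto_finsetSum _ fun r hr => (tendsto_add_div_div_atTop (m - 1 - r) m).smul
    ((hY r (mem_range.1 hr)).comp (hcount r))).congr fun n => ?_
  rw [sum_range_eq_sum_residues hm Y n, Finset.smul_sum]
  refine sum_congr rfl fun r _ => ?_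
  rcases eq_or_ne (count r n) 0 with h | h
  · simp [count, h]
  · simp only [Function.comp_apply, smul_smul]
    congr 1
    simp only [count] at h ⊢
    field_simp

end Averages

/-- The factor of length `m` of the sequence `x` starting at position `i`, as a function on
`Fin m`. -/
def window {S : Type*} (x : ℕ → S) (m i : ℕ) : Fin m → S :=
  fun j => x (i + j)

section StrongLaw

variable {Ω S E : Type*} [MeasurableSpace Ω] [MeasurableSpace S] {P : Measure Ω} {μ : Measure S}

theorem indepFun_tuple_of_disjoint_range {ι α β : Type*} [Finite α] [Finite β] {X : ι → Ω → S}
    (hX : ∀ i, AEMeasurable (X i) P) (hindep : iIndepFun X P) {g : α → ι} {h : β → ι}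
    (hgh : Disjoint (Set.range g) (Set.range h)) :
    IndepFun (fun ω a => X (g a) ω) (fun ω b => X (h b) ω) P := by
  let G := (Set.finite_range g).toFinset
  let H := (Set.finite_range h).toFinset
  have hGH : Disjoint G H := by simpa [G, H] using hgh
  have hφ : Measurable fun (z : G → S) (a : α) => z ⟨g a, by simp [G]⟩ := by fun_prop
  have hψ : Measurable fun (z : H → S) (b : β) => z ⟨h b, by simp [H]⟩ := by fun_prop
  exact (hindep.indepFun_finset₀ G H hGH hX).comp hφ hψ

variable {X : ℕ → Ω → S}

theorem hasLaw_window (hlaw : ∀ i, HasLaw (X i) μ P) (hindep : iIndepFun X P) (m i : ℕ) :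
    HasLaw (fun ω => window (X · ω) m i) (Measure.pi fun _ => μ) P :=
  (hindep.precomp fun _ _ h => Fin.ext (Nat.add_left_cancel h)).hasLaw_pi
    fun j : Fin m => hlaw (i + j)

theorem indepFun_window (hX : ∀ i, AEMeasurable (X i) P) (hindep : iIndepFun X P) {m i i' : ℕ}
    (h : i + m ≤ i' ∨ i' + m ≤ i) :
    IndepFun (fun ω => window (X · ω) m i) (fun ω => window (X · ω) m i') P := by
  refine indepFun_tuple_of_disjoint_range hX hindep (g := fun j : Fin m => i + j)
    (h := fun j : Fin m => i' + j) ?_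
  rw [Set.disjoint_right]
  rintro _ ⟨j, rfl⟩ ⟨j', hj'⟩
  dsimp only at hj'
  omega

variable [NormedAddCommGroup E] [NormedSpace ℝ E] [CompleteSpace E] [MeasurableSpace E]
  [BorelSpace E]

theorem strong_law_ae_window (hlaw : ∀ i, HasLaw (X i) μ P) (hindep : iIndepFun X P) {m : ℕ}
    {f : (Fin m → S) → E} (hf : Measurable f)
    (hint : Integrable f (Measure.pi fun _ => μ)) :
    ∀ᵐ ω ∂P, Tendsto (fun n : ℕ => (n : ℝ)⁻¹ • ∑ i ∈ range n, f (window (X · ω) m i)) atTop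
      (𝓝 (∫ u, f u ∂Measure.pi fun _ => μ)) := by
  have hW := hasLaw_window hlaw hindep m
  -- The modulus is `m + 1` rather than `m` because `m` may be `0`.
  have hresidue (r : ℕ) : ∀ᵐ ω ∂P, Tendsto
      (fun k : ℕ => (k : ℝ)⁻¹ • ∑ i ∈ range k, f (window (X · ω) m (r + i * (m + 1)))) atTop
      (𝓝 (∫ u, f u ∂Measure.pi fun _ => μ)) := by
    rw [← (hW (r + 0 * (m + 1))).integral_comp hint.aestronglyMeasurable]
    refine strong_law_ae (fun i ω => f (window (X · ω) m (r + i * (m + 1)))) ?_ ?_ ?_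
    · rw [← (hW _).map_eq] at hint
      exact hint.comp_aemeasurable (hW _).aemeasurable
    · intro i i' hne
      refine (indepFun_window (fun j => (hlaw j).aemeasurable) hindep ?_).comp hf hf
      rcases hne.lt_or_gt with h | h
      · exact .inl (by nlinarith)
      · exact .inr (by nlinarith)
    · exact fun i => ((hW _).identDistrib (hW _)).comp hf
  filter_upwards [ae_all_iff.2 hresidue] with ω hω
  have haverage := tendsto_average_of_residues (Y := fun i => f (window (X · ω) m i)) m.succ_pos
    fun r _ => hω r
  rwa [sum_const, card_range, ← Nat.cast_smul_eq_nsmul ℝ, inv_smul_smul₀ (by positivity)]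
    at haverage

end StrongLaw

/-- A sequence is generic for the product measure `μ^ℕ` if every finite word `u` occurs in it with
asymptotic frequency `∏ j, μ {u j}`. -/
def IsGeneric {S : Type*} [DecidableEq S] [MeasurableSpace S] (μ : Measure S) (x : ℕ → S) : Prop :=
  ∀ (m : ℕ) (u : Fin m → S),
    Tendsto (fun n : ℕ => (#{i ∈ range n | window x m i = u} : ℝ) / n) atTop
      (𝓝 (∏ j, μ.real {u j}))

section Existence

variable {Ω S : Type*} [MeasurableSpace Ω] [MeasurableSpace S] [MeasurableSingletonClass S]
  [Countable S] [DecidableEq S] {P : Measure Ω} {X : ℕ → Ω → S}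

theorem ae_isGeneric {μ : Measure S} (hlaw : ∀ i, HasLaw (X i) μ P) (hindep : iIndepFun X P) :
    ∀ᵐ ω ∂P, IsGeneric μ (X · ω) := by
  have : IsProbabilityMeasure P := hindep.isProbabilityMeasure
  have : IsProbabilityMeasure μ := (hlaw 0).isProbabilityMeasure_iff.1 this
  simp only [IsGeneric, ae_all_iff]
  intro m u
  have hu : MeasurableSet {u} := measurableSet_singleton u
  filter_upwards [strong_law_ae_window hlaw hindep (f := Set.indicator {u} (1 : (Fin m → S) → ℝ))
    (measurable_one.indicator hu) ((integrable_const 1).indicator hu)] with ω hω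
  convert! hω using 2 with n
  · simp [Set.indicator_apply, div_eq_inv_mul]
  · rw [integral_indicator_one hu, measureReal_def, Measure.pi_singleton, ENNReal.toReal_prod]
    rfl

theorem exists_isGeneric (μ : Measure S) [IsProbabilityMeasure μ] : ∃ x : ℕ → S, IsGeneric μ x := by
  obtain ⟨Ω, _, P, X, -, hlaw, hindep, _⟩ := exists_iid ℕ μ
  obtain ⟨ω, hω⟩ := (ae_isGeneric hlaw hindep).exists
  exact ⟨_, hω⟩

end Existence

section WordSums

variable {S : Type*} [Fintype S] {p : S → ℝ}

theorem sum_prod_word_eq_one (hp : ∑ b, p b = 1) (ℓ : ℕ) :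
    ∑ u : Fin ℓ → S, ∏ j, p (u j) = 1 := by
  rw [← Fintype.sum_pow, hp, one_pow]

theorem sum_negMulLog_prod_word (hp : ∑ b, p b = 1) (ℓ : ℕ) :
    ∑ u : Fin ℓ → S, Real.negMulLog (∏ j, p (u j)) = ℓ * ∑ b, Real.negMulLog (p b) := by
  induction ℓ with
  | zero => simp
  | succ ℓ ih =>
    rw [← (Fin.consEquiv fun _ => S).sum_comp, Fintype.sum_prod_type]
    simp only [Fin.consEquiv_apply, Fin.prod_univ_succ, Fin.cons_zero, Fin.cons_succ,
      Real.negMulLog_mul, sum_add_distrib, ← sum_mul, ← mul_sum, ih, sum_prod_word_eq_one hp, hp]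
    push_cast
    ring

theorem sum_prod_word_filter_ne [DecidableEq S] (hp : ∑ b, p b = 1) {ℓ : ℕ} (k : Fin (ℓ + 1))
    (f : (Fin ℓ → S) → S) :
    ∑ u : Fin (ℓ + 1) → S with u k ≠ f (k.removeNth u), ∏ j, p (u j) =
      ∑ w : Fin ℓ → S, (∏ j, p (w j)) * (1 - p (f w)) := by
  have hne (c : S) : ∑ b with b ≠ c, p b = 1 - p c := by
    rw [filter_ne', sum_erase_eq_sub (mem_univ c), hp]
  rw [sum_filter, ← (Fin.insertNthEquiv (fun _ => S) k).sum_comp, Fintype.sum_prod_type_right]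
  refine sum_congr rfl fun w _ => ?_
  rw [← hne, sum_filter, mul_sum]
  refine sum_congr rfl fun b _ => ?_
  simp [Fin.insertNthEquiv, Fin.prod_univ_succAbove _ k, mul_comm]

theorem inf'_sum_mul_comp {W : Type*} [Fintype W] [DecidableEq W] [Nonempty S] {q : W → ℝ}
    (hq : ∀ w, 0 ≤ q w) (hq_sum : ∑ w, q w = 1) {c : S → ℝ} {b₀ : S} (hb₀ : ∀ b, c b₀ ≤ c b) :
    univ.inf' univ_nonempty (fun f : W → S => ∑ w, q w * c (f w)) = c b₀ := by
  have hconst : ∑ w, q w * c b₀ = c b₀ := by rw [← sum_mul, hq_sum, one_mul]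
  refine le_antisymm ((inf'_le _ (mem_univ fun _ => b₀)).trans_eq hconst)
    (le_inf' _ _ fun f _ => ?_)
  rw [← hconst]
  gcongr with w
  · exact hq w
  · exact hb₀ (f w)

end WordSums

/-- The least number of errors made on the windows of `x` of length `ℓ + 1` starting before `n` by a
rule predicting the letter at position `k` of a window from its other `ℓ` letters. -/
noncomputable def minPredictionErrors {S : Type*} [Fintype S] [DecidableEq S] [Nonempty S] {ℓ : ℕ}
    (k : Fin (ℓ + 1)) (x : ℕ → S) (n : ℕ) : ℝ :=
  univ.inf' univ_nonempty fun f : (Fin ℓ → S) → S =>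
    (#{i ∈ range n | window x (ℓ + 1) i k ≠ f (k.removeNth (window x (ℓ + 1) i))} : ℝ)

namespace IsGeneric

variable {S : Type*} [Fintype S] [DecidableEq S] [MeasurableSpace S] {μ : Measure S} {x : ℕ → S}

theorem tendsto_freq (hx : IsGeneric μ x) {m : ℕ} (A : (Fin m → S) → Prop) [DecidablePred A] :
    Tendsto (fun n : ℕ => (#{i ∈ range n | A (window x m i)} : ℝ) / n) atTop
      (𝓝 (∑ u with A u, ∏ j, μ.real {u j})) := by
  refine (tendsto_finsetSum {u | A u} fun u _ => hx m u).congr fun n => ?_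
  rw [← Finset.sum_div, ← Nat.cast_sum, card_eq_sum_card_fiberwise (f := window x m)
    (t := {u | A u}) (by intro i; simp)]
  congr! 4 with u hu
  rw [filter_filter]
  grind

variable [MeasurableSingletonClass S] [IsProbabilityMeasure μ]

theorem tendsto_minPredictionErrors_div [Nonempty S] (hx : IsGeneric μ x) {b₀ : S}
    (hb₀ : ∀ b, μ.real {b} ≤ μ.real {b₀}) {ℓ : ℕ} (k : Fin (ℓ + 1)) :
    Tendsto (fun n : ℕ => minPredictionErrors k x n / n) atTop (𝓝 (1 - μ.real {b₀})) := by
  have hμ : ∑ b, μ.real {b} = 1 := by simp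
  have herror (f : (Fin ℓ → S) → S) := hx.tendsto_freq fun u => u k ≠ f (k.removeNth u)
  simp only [sum_prod_word_filter_ne hμ] at herror
  have hinf := Tendsto.finset_inf'_nhds_apply univ_nonempty fun f _ => herror f
  rw [inf'_sum_mul_comp (fun w => by positivity) (sum_prod_word_eq_one hμ ℓ)
    (c := fun b => 1 - μ.real {b}) fun b => sub_le_sub_left (hb₀ b) 1] at hinf
  refine hinf.congr fun n => ?_
  exact (apply_inf'_eq_inf'_comp univ_nonempty (· / (n : ℝ))
    fun a b => (min_div_div_right n.cast_nonneg a b).symm).symm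

theorem tendsto_sum_negMulLog (hx : IsGeneric μ x) (ℓ : ℕ) :
    Tendsto (fun n : ℕ => ∑ u : Fin ℓ → S,
        Real.negMulLog ((#{i ∈ range n | window x ℓ i = u} : ℝ) / n)) atTop
      (𝓝 (ℓ * ∑ b, Real.negMulLog (μ.real {b}))) := by
  rw [← sum_negMulLog_prod_word (by simp)]
  exact tendsto_finsetSum _ fun u _ => (Real.continuous_negMulLog.tendsto _).comp (hx ℓ u)

end IsGeneric

section Binary

variable {ℓ n : ℕ}

theorem betaWord_eq (x : ℕ → Bool) (h : ℓ ≤ n) :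
    betaWord ℓ x n = minPredictionErrors (0 : Fin (ℓ + 1)) x (n - ℓ) / (n - ℓ : ℕ) := by
  rw [betaWord, minPredictionErrors, Nat.cast_sub h, one_div_mul_eq_div]
  simp [window, Fin.tail_def, add_comm, add_left_comm]

theorem gammaWord_eq (x : ℕ → Bool) (h : ℓ ≤ n) :
    gammaWord ℓ x n = minPredictionErrors (Fin.last ℓ) x (n - ℓ) / (n - ℓ : ℕ) := by
  have hIco : Ico ℓ n = (range (n - ℓ)).map (addRightEmbedding ℓ) := by
    rw [range_eq_Ico, map_add_right_Ico, zero_add, Nat.sub_add_cancel h]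
  rw [gammaWord, minPredictionErrors, Nat.cast_sub h, one_div_mul_eq_div]
  simp [window, Fin.init_def, hIco, filter_map]

theorem occ_ofFn (x : ℕ → Bool) (u : Fin ℓ → Bool) :
    occ x n (List.ofFn u) = #{i ∈ range (n + 1 - ℓ) | window x ℓ i = u} := by
  have hfactor (i : ℕ) : factor x i ℓ = List.ofFn (window x ℓ i) := rfl
  simp only [occ, List.length_ofFn, hfactor, List.ofFn_injective.eq_iff]

theorem hBlock_eq (x : ℕ → Bool) (h : ℓ ≤ n) :
    hBlock ℓ x n = (ℓ * Real.log 2)⁻¹ * ∑ u : Fin ℓ → Bool,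
      Real.negMulLog ((#{i ∈ range (n + 1 - ℓ) | window x ℓ i = u} : ℝ) / (n + 1 - ℓ : ℕ)) := by
  have hcast : ((n + 1 - ℓ : ℕ) : ℝ) = n - ℓ + 1 := by
    rw [Nat.cast_sub (by omega)]
    push_cast
    ring
  simp only [hBlock, occ_ofFn, hcast, mul_sum, Real.negMulLog, Real.logb]
  refine sum_congr rfl fun u _ => ?_
  field_simp

theorem binEntropy_eq_negMulLog (a : ℝ) :
    binEntropy a = (Real.negMulLog a + Real.negMulLog (1 - a)) / Real.log 2 := by
  simp only [binEntropy, Real.negMulLog, Real.logb]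
  ring

end Binary

theorem liminf_limsup_eq_of_tendsto {ι κ R : Type*} [ConditionallyCompleteLinearOrder R]
    [TopologicalSpace R] [OrderTopology R] {f : Filter ι} {g : Filter κ} [f.NeBot] [g.NeBot]
    {F : ι → κ → R} {a : R} (h : ∀ᶠ i in f, Tendsto (F i) g (𝓝 a)) :
    (f.liminf fun i => g.liminf (F i)) = a ∧ (f.limsup fun i => g.limsup (F i)) = a :=
  ⟨(tendsto_const_nhds.congr' (h.mono fun _ hi => hi.liminf_eq.symm)).liminf_eq,
    (tendsto_const_nhds.congr' (h.mono fun _ hi => hi.limsup_eq.symm)).limsup_eq⟩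

section BernoulliGeneric

variable {α : unitInterval} {x : ℕ → Bool}

theorem tendsto_minPredictionErrors_sub_div (hx : IsGeneric Ber(true, false, α) x)
    (hα : (α : ℝ) ≤ 1 / 2) {ℓ : ℕ} (k : Fin (ℓ + 1)) :
    Tendsto (fun n => minPredictionErrors k x (n - ℓ) / (n - ℓ : ℕ)) atTop (𝓝 (α : ℝ)) := by
  have htrue : Ber(true, false, α).real {true} = α := by simp
  have hfalse : Ber(true, false, α).real {false} = 1 - α := by simp
  have hmax : ∀ b, Ber(true, false, α).real {b} ≤ Ber(true, false, α).real {false} := by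
    rw [Bool.forall_bool, htrue, hfalse]
    exact ⟨le_rfl, by linarith⟩
  have h := hx.tendsto_minPredictionErrors_div hmax k
  rw [hfalse, sub_sub_cancel] at h
  exact h.comp (tendsto_sub_atTop_nat ℓ)

theorem tendsto_gammaWord (hx : IsGeneric Ber(true, false, α) x) (hα : (α : ℝ) ≤ 1 / 2) (ℓ : ℕ) :
    Tendsto (gammaWord ℓ x) atTop (𝓝 (α : ℝ)) := by
  refine (tendsto_minPredictionErrors_sub_div hx hα (Fin.last ℓ)).congr' ?_
  filter_upwards [eventually_ge_atTop ℓ] with n hn using (gammaWord_eq x hn).symm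

theorem tendsto_betaWord (hx : IsGeneric Ber(true, false, α) x) (hα : (α : ℝ) ≤ 1 / 2) (ℓ : ℕ) :
    Tendsto (betaWord ℓ x) atTop (𝓝 (α : ℝ)) := by
  refine (tendsto_minPredictionErrors_sub_div hx hα (0 : Fin (ℓ + 1))).congr' ?_
  filter_upwards [eventually_ge_atTop ℓ] with n hn using (betaWord_eq x hn).symm

theorem tendsto_hBlock (hx : IsGeneric Ber(true, false, α) x) {ℓ : ℕ} (hℓ : ℓ ≠ 0) :
    Tendsto (hBlock ℓ x) atTop (𝓝 (binEntropy α)) := by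
  have hlim : binEntropy α = (ℓ * Real.log 2)⁻¹ *
      (ℓ * ∑ b, Real.negMulLog (Ber(true, false, α).real {b})) := by
    rw [Fintype.sum_bool, binEntropy_eq_negMulLog,
      bernoulliMeasure_real_apply_of_mem_of_notMem _ (by simp) (by simp) (by simp),
      bernoulliMeasure_real_apply_of_notMem_of_mem _ (by simp) (by simp) (by simp)]
    field_simp
  have hshift : Tendsto (fun n => n + 1 - ℓ) atTop atTop :=
    (tendsto_sub_atTop_nat ℓ).comp (tendsto_add_atTop_nat 1)
  rw [hlim]
  refine (((hx.tendsto_sum_negMulLog ℓ).comp hshift).const_mul _).congr' ?_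
  filter_upwards [eventually_ge_atTop ℓ] with n hn using (hBlock_eq x hn).symm

end BernoulliGeneric

theorem exists_seq_entropy_eq_binEntropy (α : ℝ) (h0 : 0 ≤ α) (h1 : α ≤ 1 / 2) :
    ∃ x : ℕ → Bool,
      gammaLow x = α ∧ gammaUp x = α ∧ betaLow x = α ∧ betaUp x = α ∧
      hLow x = binEntropy α ∧ hUp x = binEntropy α := by
  obtain ⟨x, hx⟩ := exists_isGeneric Ber(true, false, ⟨α, h0, by linarith⟩)
  obtain ⟨hγ_low, hγ_up⟩ := liminf_limsup_eq_of_tendsto (f := atTop)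
    (.of_forall (tendsto_gammaWord hx h1))
  obtain ⟨hβ_low, hβ_up⟩ := liminf_limsup_eq_of_tendsto (f := atTop)
    (.of_forall (tendsto_betaWord hx h1))
  obtain ⟨hh_low, hh_up⟩ := liminf_limsup_eq_of_tendsto
    ((eventually_ne_atTop 0).mono fun _ hℓ => tendsto_hBlock hx hℓ)
  exact ⟨x, hγ_low, hγ_up, hβ_low, hβ_up, hh_low, hh_up⟩
end

section
/- For all x, y, z ∈ B^ℕ such that val(z) equals the fractional part of val(x) + val(y), it holds that h̲(x) − h̄(y) ≤ h̲(z) ≤ h̲(x) + h̄(y). -/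
open Filter Topology

/-!
If `c * val z` and `a * val x + b * val y` differ by an integer, then the same holds for all tails
of the three sequences; the integer at position `i`, the carry `k i`, is bounded by
`|a| + |b| + |c|`. Subtracting the relation at `i + ℓ` from `2 ^ ℓ` times the relation at `i`
leaves an exact equation between the blocks of length `ℓ` at `i`, read as binary numbers, with
error term `2 ^ ℓ * k i - k (i + ℓ)`. Hence, when `c ≠ 0`, a block of `z` is determined by the
blocks of `x` and `y` together with two numbers from a finite set that does not depend on `ℓ`, so
the empirical entropy of the blocks of `z` exceeds the sum of those of `x` and `y` by at most a
constant, which disappears after division by `ℓ → ∞`. Solving the relation for `val x` instead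
gives the lower bound.
-/

open scoped BigOperators Finset

section EmpiricalEntropy

variable {ι α β : Type*} [DecidableEq α] [DecidableEq β] {s : Finset ι} {f : ι → α} {g : ι → β}

/-- The relative frequency of the value `a` among the samples `f i`, `i ∈ s`. -/
noncomputable def frequency (s : Finset ι) (f : ι → α) (a : α) : ℝ :=
  #{i ∈ s | f i = a} / #s

/-- The base-2 Shannon entropy of the empirical distribution of the samples `f i`, `i ∈ s`, written
as their mean surprisal so that the alphabet `α` need not be finite. -/
noncomputable def empiricalEntropy (s : Finset ι) (f : ι → α) : ℝ :=
  𝔼 i ∈ s, -Real.logb 2 (frequency s f (f i))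

theorem frequency_nonneg (s : Finset ι) (f : ι → α) (a : α) : 0 ≤ frequency s f a := by
  unfold frequency
  positivity

theorem frequency_le_one (s : Finset ι) (f : ι → α) (a : α) : frequency s f a ≤ 1 :=
  div_le_one_of_le₀ (mod_cast Finset.card_filter_le _ _) (Nat.cast_nonneg _)

theorem frequency_apply_pos {i : ι} (hi : i ∈ s) : 0 < frequency s f (f i) := by
  have hfiber : 0 < #{j ∈ s | f j = f i} := Finset.card_pos.mpr ⟨i, by simp [hi]⟩
  have hs : 0 < #s := Finset.card_pos.mpr ⟨i, hi⟩
  unfold frequency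
  positivity

theorem expect_comp_eq_sum_frequency_mul {t : Finset α} (hft : ∀ i ∈ s, f i ∈ t) (φ : α → ℝ) :
    𝔼 i ∈ s, φ (f i) = ∑ a ∈ t, frequency s f a * φ a := by
  rw [Finset.expect_eq_sum_div_card, ← Finset.sum_fiberwise_of_maps_to' hft φ, Finset.sum_div]
  refine Finset.sum_congr rfl fun a _ => ?_
  rw [Finset.sum_const, nsmul_eq_mul, frequency, div_mul_eq_mul_div]

theorem sum_frequency_eq_one {t : Finset α} (hs : s.Nonempty) (hft : ∀ i ∈ s, f i ∈ t) :
    ∑ a ∈ t, frequency s f a = 1 := by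
  simpa [Finset.expect_const hs] using (expect_comp_eq_sum_frequency_mul hft fun _ => 1).symm

theorem empiricalEntropy_eq_neg_sum [Fintype α] (s : Finset ι) (f : ι → α) :
    empiricalEntropy s f = -∑ a, frequency s f a * Real.logb 2 (frequency s f a) := by
  rw [empiricalEntropy, Finset.expect_neg_distrib,
    expect_comp_eq_sum_frequency_mul (fun i _ => Finset.mem_univ (f i)) fun a =>
      Real.logb 2 (frequency s f a)]

theorem empiricalEntropy_nonneg (s : Finset ι) (f : ι → α) : 0 ≤ empiricalEntropy s f :=
  Finset.expect_nonneg fun _ _ => neg_nonneg.mpr <|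
    Real.logb_nonpos one_lt_two (frequency_nonneg s f _) (frequency_le_one s f _)

theorem expect_div_frequency_le {t : Finset α} {q : α → ℝ} (hft : ∀ i ∈ s, f i ∈ t)
    (hq : ∀ a ∈ t, 0 ≤ q a) : 𝔼 i ∈ s, q (f i) / frequency s f (f i) ≤ ∑ a ∈ t, q a := by
  rw [expect_comp_eq_sum_frequency_mul hft fun a => q a / frequency s f a]
  refine Finset.sum_le_sum fun a ha => ?_
  rcases eq_or_ne (frequency s f a) 0 with hzero | hne
  · simpa [hzero] using hq a ha
  · rw [mul_div_cancel₀ _ hne]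

/-- Gibbs' inequality. -/
theorem empiricalEntropy_le_expect_neg_logb {t : Finset α} {q : α → ℝ} (hft : ∀ i ∈ s, f i ∈ t)
    (hq : ∀ a ∈ t, 0 < q a) (hsum : ∑ a ∈ t, q a ≤ 1) :
    empiricalEntropy s f ≤ 𝔼 i ∈ s, -Real.logb 2 (q (f i)) := by
  rcases s.eq_empty_or_nonempty with rfl | hs
  · simp [empiricalEntropy]
  have hlog : 0 < Real.log 2 := Real.log_pos one_lt_two
  have hterm : ∀ i ∈ s, -Real.logb 2 (frequency s f (f i)) ≤
      -Real.logb 2 (q (f i)) + (q (f i) / frequency s f (f i) - 1) / Real.log 2 := by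
    intro i hi
    have hp := frequency_apply_pos (f := f) hi
    have hqi := hq _ (hft i hi)
    have hlogb : Real.logb 2 (q (f i) / frequency s f (f i)) ≤
        (q (f i) / frequency s f (f i) - 1) / Real.log 2 :=
      div_le_div_of_nonneg_right (Real.log_le_sub_one_of_pos (div_pos hqi hp)) hlog.le
    rw [Real.logb_div hqi.ne' hp.ne'] at hlogb
    linarith
  calc empiricalEntropy s f
      ≤ 𝔼 i ∈ s, (-Real.logb 2 (q (f i)) +
          (q (f i) / frequency s f (f i) - 1) / Real.log 2) := Finset.expect_le_expect hterm
    _ = 𝔼 i ∈ s, -Real.logb 2 (q (f i)) +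
          (𝔼 i ∈ s, q (f i) / frequency s f (f i) - 1) / Real.log 2 := by
        rw [Finset.expect_add_distrib, ← Finset.expect_div, Finset.expect_sub_distrib,
          Finset.expect_const hs]
    _ ≤ 𝔼 i ∈ s, -Real.logb 2 (q (f i)) := by
        have hratio := (expect_div_frequency_le hft fun a ha => (hq a ha).le).trans hsum
        exact add_le_of_nonpos_right
          (div_nonpos_of_nonpos_of_nonneg (sub_nonpos.mpr hratio) hlog.le)

theorem empiricalEntropy_le_logb_card {t : Finset α} (hs : s.Nonempty) (hft : ∀ i ∈ s, f i ∈ t) :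
    empiricalEntropy s f ≤ Real.logb 2 #t := by
  obtain ⟨i, hi⟩ := hs
  have ht : (0 : ℝ) < #t := mod_cast Finset.card_pos.mpr ⟨f i, hft i hi⟩
  have huniform : ∑ _a ∈ t, (#t : ℝ)⁻¹ = 1 := by
    rw [Finset.sum_const, nsmul_eq_mul, mul_inv_cancel₀ ht.ne']
  simpa [Real.logb_inv, Finset.expect_const ⟨i, hi⟩] using
    empiricalEntropy_le_expect_neg_logb hft (fun _ _ => inv_pos.mpr ht) huniform.le

theorem empiricalEntropy_prodMk_le (s : Finset ι) (f : ι → α) (g : ι → β) :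
    empiricalEntropy s (fun i => (f i, g i)) ≤ empiricalEntropy s f + empiricalEntropy s g := by
  rcases s.eq_empty_or_nonempty with rfl | hs
  · simp [empiricalEntropy]
  have hf : ∀ i ∈ s, f i ∈ s.image f := fun i hi => Finset.mem_image_of_mem f hi
  have hg : ∀ i ∈ s, g i ∈ s.image g := fun i hi => Finset.mem_image_of_mem g hi
  have hpos : ∀ p ∈ s.image f ×ˢ s.image g, 0 < frequency s f p.1 * frequency s g p.2 := by
    simp only [Finset.mem_product, Finset.mem_image]
    rintro ⟨_, _⟩ ⟨⟨i, hi, rfl⟩, ⟨j, hj, rfl⟩⟩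
    exact mul_pos (frequency_apply_pos hi) (frequency_apply_pos hj)
  have hsum : ∑ p ∈ s.image f ×ˢ s.image g, frequency s f p.1 * frequency s g p.2 = 1 := by
    rw [Finset.sum_product, ← Finset.sum_mul_sum, sum_frequency_eq_one hs hf,
      sum_frequency_eq_one hs hg, one_mul]
  calc empiricalEntropy s (fun i => (f i, g i))
      ≤ 𝔼 i ∈ s, -Real.logb 2 (frequency s f (f i) * frequency s g (g i)) :=
        empiricalEntropy_le_expect_neg_logb
          (fun i hi => Finset.mk_mem_product (hf i hi) (hg i hi)) hpos hsum.le
    _ = 𝔼 i ∈ s, (-Real.logb 2 (frequency s f (f i)) + -Real.logb 2 (frequency s g (g i))) :=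
        Finset.expect_congr rfl fun i hi => by
          rw [Real.logb_mul (frequency_apply_pos hi).ne' (frequency_apply_pos hi).ne', neg_add]
    _ = empiricalEntropy s f + empiricalEntropy s g := Finset.expect_add_distrib s _ _

theorem empiricalEntropy_le_of_determines (h : ∀ i ∈ s, ∀ j ∈ s, g i = g j → f i = f j) :
    empiricalEntropy s f ≤ empiricalEntropy s g := by
  refine Finset.expect_le_expect fun i hi => neg_le_neg ?_
  refine Real.logb_le_logb_of_le one_lt_two (frequency_apply_pos hi) ?_
  refine div_le_div_of_nonneg_right (Nat.cast_le.mpr (Finset.card_le_card ?_)) (Nat.cast_nonneg _)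
  exact Finset.monotone_filter_right s fun j hj hji => h j hj i hi hji

end EmpiricalEntropy

section Blocks

/-- The length-`ℓ` block `x[i:i+ℓ)` of `x`, as a function on `Fin ℓ`. -/
def block (ℓ : ℕ) (x : ℕ → Bool) (i : ℕ) : Fin ℓ → Bool :=
  fun j => x (i + j)

/-- The number whose `ℓ`-digit binary expansion is `u`, the most significant digit first. -/
def blockValue {ℓ : ℕ} (u : Fin ℓ → Bool) : ℕ :=
  Nat.ofBits (u ∘ Fin.rev)

theorem blockValue_injective (ℓ : ℕ) :
    Function.Injective (blockValue : (Fin ℓ → Bool) → ℕ) := by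
  intro u v huv
  funext j
  have hbit := congrArg (Nat.testBit · j.rev) huv
  simpa only [blockValue, Nat.testBit_ofBits_lt _ _ j.rev.isLt, Function.comp_apply, Fin.eta,
    Fin.rev_rev] using hbit

theorem blockValue_block_succ (ℓ : ℕ) (x : ℕ → Bool) (i : ℕ) :
    blockValue (block (ℓ + 1) x i) = 2 * blockValue (block ℓ x i) + (x (i + ℓ)).toNat := by
  rw [blockValue, Nat.ofBits_succ]
  congr 2
  refine congrArg Nat.ofBits (funext fun j => ?_)
  simp [block, Fin.rev_succ]

theorem card_filter_block_eq_occ (ℓ : ℕ) (x : ℕ → Bool) (n : ℕ) (u : Fin ℓ → Bool) :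
    #{i ∈ Finset.range (n + 1 - ℓ) | block ℓ x i = u} = occ x n (List.ofFn u) := by
  have hfactor (i : ℕ) : factor x i ℓ = List.ofFn u ↔ block ℓ x i = u :=
    List.ofFn_inj
  simp only [occ, List.length_ofFn, hfactor]

theorem hBlock_eq_empiricalEntropy_div {ℓ n : ℕ} (hℓ : ℓ ≤ n) (x : ℕ → Bool) :
    hBlock ℓ x n = empiricalEntropy (Finset.range (n + 1 - ℓ)) (block ℓ x) / ℓ := by
  have hcard : (n : ℝ) - ℓ + 1 = #(Finset.range (n + 1 - ℓ)) := by
    rw [Finset.card_range, Nat.cast_sub (by lia)]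
    push_cast
    ring
  simp only [hBlock, empiricalEntropy_eq_neg_sum, frequency, card_filter_block_eq_occ, hcard]
  ring

theorem hBlock_mem_Icc {ℓ n : ℕ} (hℓ : ℓ ≤ n) (x : ℕ → Bool) : hBlock ℓ x n ∈ Set.Icc 0 1 := by
  have hs : (Finset.range (n + 1 - ℓ)).Nonempty := Finset.nonempty_range_iff.mpr (by lia)
  have hcard : empiricalEntropy (Finset.range (n + 1 - ℓ)) (block ℓ x) ≤ ℓ := by
    simpa [Real.logb_pow] using
      empiricalEntropy_le_logb_card hs fun i _ => Finset.mem_univ (block ℓ x i)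
  rw [hBlock_eq_empiricalEntropy_div hℓ]
  exact ⟨div_nonneg (empiricalEntropy_nonneg _ _) ℓ.cast_nonneg,
    div_le_one_of_le₀ hcard ℓ.cast_nonneg⟩

end Blocks

section Carries

theorem val_eq_ofDigits (x : ℕ → Bool) : val x = Real.ofDigits (finTwoEquiv.symm ∘ x) := by
  refine tsum_congr fun n => ?_
  cases h : x n <;> simp [Real.ofDigitsTerm, finTwoEquiv, h]

theorem val_mem_Icc (x : ℕ → Bool) : val x ∈ Set.Icc 0 1 := by
  rw [val_eq_ofDigits]
  exact ⟨Real.ofDigits_nonneg _, Real.ofDigits_le_one _⟩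

theorem two_mul_val (x : ℕ → Bool) : 2 * val x = (x 0).toNat + val (fun n => x (n + 1)) := by
  rw [val_eq_ofDigits, Real.ofDigits_eq_sum_add_ofDigits _ 1, val_eq_ofDigits]
  cases h : x 0 <;> simp [Real.ofDigitsTerm, finTwoEquiv, h, Function.comp_def, mul_add]

/-- The number in `[0, 1]` denoted by the tail `x[i:∞)`. -/
noncomputable def tailVal (x : ℕ → Bool) (i : ℕ) : ℝ :=
  val fun n => x (n + i)

theorem two_mul_tailVal (x : ℕ → Bool) (i : ℕ) :
    2 * tailVal x i = (x i).toNat + tailVal x (i + 1) := by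
  simpa only [tailVal, zero_add, add_assoc, add_comm 1 i] using two_mul_val fun n => x (n + i)

theorem two_pow_mul_tailVal (ℓ : ℕ) (x : ℕ → Bool) (i : ℕ) :
    2 ^ ℓ * tailVal x i = blockValue (block ℓ x i) + tailVal x (i + ℓ) := by
  induction ℓ with
  | zero => simp [blockValue]
  | succ ℓ ih =>
    rw [pow_succ', mul_assoc, ih, mul_add, two_mul_tailVal, blockValue_block_succ]
    push_cast
    ring_nf

variable {a b c m : ℤ} {x y z : ℕ → Bool}

theorem exists_carry (h : c * val z = a * val x + b * val y + m) (i : ℕ) :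
    ∃ k : ℤ, c * tailVal z i = a * tailVal x i + b * tailVal y i + k := by
  induction i with
  | zero => exact ⟨m, h⟩
  | succ i ih =>
    obtain ⟨k, hk⟩ := ih
    refine ⟨2 * k + a * (x i).toNat + b * (y i).toNat - c * (z i).toNat, ?_⟩
    push_cast
    linear_combination 2 * hk - c * two_mul_tailVal z i + a * two_mul_tailVal x i +
      b * two_mul_tailVal y i

theorem abs_carry_le {k : ℤ} {i : ℕ}
    (h : c * tailVal z i = a * tailVal x i + b * tailVal y i + k) : |k| ≤ |a| + |b| + |c| := by
  have hterm (d : ℤ) (w : ℕ → Bool) : |d * tailVal w i| ≤ |(d : ℝ)| := by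
    have hw := val_mem_Icc fun n => w (n + i)
    rw [abs_mul, tailVal, abs_of_nonneg hw.1]
    exact mul_le_of_le_one_right (abs_nonneg _) hw.2
  have hk : (k : ℝ) = c * tailVal z i - a * tailVal x i - b * tailVal y i := by linarith
  have hreal : |(k : ℝ)| ≤ |(a : ℝ)| + |(b : ℝ)| + |(c : ℝ)| :=
    calc |(k : ℝ)|
        ≤ |c * tailVal z i| + |a * tailVal x i| + |b * tailVal y i| := by
          rw [hk]
          exact (abs_sub _ _).trans (add_le_add_left (abs_sub _ _) _)
      _ ≤ |(a : ℝ)| + |(b : ℝ)| + |(c : ℝ)| := by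
          linarith [hterm a x, hterm b y, hterm c z]
  exact_mod_cast hreal

theorem mul_blockValue_eq (ℓ : ℕ) {i : ℕ} {k kNext : ℤ}
    (hk : c * tailVal z i = a * tailVal x i + b * tailVal y i + k)
    (hnext : c * tailVal z (i + ℓ) = a * tailVal x (i + ℓ) + b * tailVal y (i + ℓ) + kNext) :
    c * blockValue (block ℓ z i) =
      a * blockValue (block ℓ x i) + b * blockValue (block ℓ y i) + 2 ^ ℓ * k - kNext := by
  have hreal : (c * blockValue (block ℓ z i) : ℝ) =
      a * blockValue (block ℓ x i) + b * blockValue (block ℓ y i) + 2 ^ ℓ * k - kNext := by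
    linear_combination 2 ^ ℓ * hk - hnext - c * two_pow_mul_tailVal ℓ z i +
      a * two_pow_mul_tailVal ℓ x i + b * two_pow_mul_tailVal ℓ y i
  exact_mod_cast hreal

theorem block_eq_of_carry_eq (hc : c ≠ 0) {k : ℕ → ℤ}
    (hk : ∀ i, c * tailVal z i = a * tailVal x i + b * tailVal y i + k i) {ℓ i j : ℕ}
    (hx : block ℓ x i = block ℓ x j) (hy : block ℓ y i = block ℓ y j)
    (hstart : k i = k j) (hend : k (i + ℓ) = k (j + ℓ)) : block ℓ z i = block ℓ z j := by
  have hvalue : c * (blockValue (block ℓ z i) : ℤ) = c * blockValue (block ℓ z j) := by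
    rw [mul_blockValue_eq ℓ (hk i) (hk (i + ℓ)), mul_blockValue_eq ℓ (hk j) (hk (j + ℓ)),
      hx, hy, hstart, hend]
  exact blockValue_injective ℓ (Nat.cast_injective (mul_left_cancel₀ hc hvalue))

theorem exists_hBlock_le_add (hc : c ≠ 0) (h : c * val z = a * val x + b * val y + m) :
    ∃ C : ℝ, ∀ ℓ n : ℕ, ℓ ≤ n → hBlock ℓ z n ≤ hBlock ℓ x n + hBlock ℓ y n + C / ℓ := by
  choose k hk using exists_carry h
  let K := Finset.Icc (-(|a| + |b| + |c|)) (|a| + |b| + |c|)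
  have hkK (i : ℕ) : k i ∈ K := Finset.mem_Icc.mpr (abs_le.mp (abs_carry_le (hk i)))
  refine ⟨Real.logb 2 #(K ×ˢ K), fun ℓ n hℓ => ?_⟩
  let s := Finset.range (n + 1 - ℓ)
  have hs : s.Nonempty := Finset.nonempty_range_iff.mpr (by lia)
  let blocks (i : ℕ) : (Fin ℓ → Bool) × (Fin ℓ → Bool) := (block ℓ x i, block ℓ y i)
  let carries (i : ℕ) : ℤ × ℤ := (k i, k (i + ℓ))
  have hdetermines : ∀ i ∈ s, ∀ j ∈ s, (blocks i, carries i) = (blocks j, carries j) →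
      block ℓ z i = block ℓ z j := by
    intro i _ j _ hij
    simp only [blocks, carries, Prod.mk.injEq] at hij
    obtain ⟨⟨hx, hy⟩, hstart, hend⟩ := hij
    exact block_eq_of_carry_eq hc hk hx hy hstart hend
  have hentropy : empiricalEntropy s (block ℓ z) ≤
      empiricalEntropy s (block ℓ x) + empiricalEntropy s (block ℓ y) +
        Real.logb 2 #(K ×ˢ K) :=
    calc empiricalEntropy s (block ℓ z)
        ≤ empiricalEntropy s fun i => (blocks i, carries i) :=
          empiricalEntropy_le_of_determines hdetermines
      _ ≤ empiricalEntropy s blocks + empiricalEntropy s carries :=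
          empiricalEntropy_prodMk_le _ _ _
      _ ≤ _ := add_le_add (empiricalEntropy_prodMk_le _ _ _)
          (empiricalEntropy_le_logb_card hs fun i _ =>
            Finset.mk_mem_product (hkK i) (hkK (i + ℓ)))
  simp only [hBlock_eq_empiricalEntropy_div hℓ, ← add_div]
  exact div_le_div_of_nonneg_right hentropy ℓ.cast_nonneg

end Carries

section Limits

variable {ι : Type*} {l : Filter ι}

theorem isBoundedUnder_of_eventually_mem_Icc {R : Type*} [Preorder R] {u : ι → R} {p q : R}
    (hu : ∀ᶠ i in l, u i ∈ Set.Icc p q) :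
    IsBoundedUnder (· ≤ ·) l u ∧ IsBoundedUnder (· ≥ ·) l u :=
  ⟨isBoundedUnder_of_eventually_le (hu.mono fun _ h => h.2),
    isBoundedUnder_of_eventually_ge (hu.mono fun _ h => h.1)⟩

variable [l.NeBot]

theorem liminf_mem_Icc {R : Type*} [ConditionallyCompleteLinearOrder R] {u : ι → R} {p q : R}
    (hu : ∀ᶠ i in l, u i ∈ Set.Icc p q) : liminf u l ∈ Set.Icc p q := by
  obtain ⟨hle, hge⟩ := isBoundedUnder_of_eventually_mem_Icc hu
  exact ⟨le_liminf_of_le hle.isCoboundedUnder_ge (hu.mono fun _ h => h.1),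
    liminf_le_of_frequently_le (hu.mono fun _ h => h.2).frequently hge⟩

theorem limsup_mem_Icc {R : Type*} [ConditionallyCompleteLinearOrder R] {u : ι → R} {p q : R}
    (hu : ∀ᶠ i in l, u i ∈ Set.Icc p q) : limsup u l ∈ Set.Icc p q := by
  obtain ⟨hle, hge⟩ := isBoundedUnder_of_eventually_mem_Icc hu
  exact ⟨le_limsup_of_frequently_le (hu.mono fun _ h => h.1).frequently hle,
    limsup_le_of_le hge.isCoboundedUnder_le (hu.mono fun _ h => h.2)⟩

theorem liminf_le_liminf_add_limsup_add {u v w r : ι → ℝ} {p₁ q₁ p₂ q₂ p₃ C : ℝ}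
    (hu : ∀ᶠ i in l, u i ∈ Set.Icc p₁ q₁) (hv : ∀ᶠ i in l, v i ∈ Set.Icc p₂ q₂)
    (hw : ∀ᶠ i in l, p₃ ≤ w i) (hr : Tendsto r l (𝓝 C))
    (h : ∀ᶠ i in l, w i ≤ u i + v i + r i) : liminf w l ≤ liminf u l + limsup v l + C := by
  obtain ⟨hu_le, hu_ge⟩ := isBoundedUnder_of_eventually_mem_Icc hu
  obtain ⟨hv_le, hv_ge⟩ := isBoundedUnder_of_eventually_mem_Icc hv
  have hr_le := hr.isBoundedUnder_le
  have hr_ge := hr.isBoundedUnder_ge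
  have hvr_le : IsBoundedUnder (· ≤ ·) l (v + r) := isBoundedUnder_le_add hv_le hr_le
  have hvr_ge : IsBoundedUnder (· ≥ ·) l (v + r) := isBoundedUnder_ge_add hv_ge hr_ge
  calc liminf w l
      ≤ liminf (v + r + u) l :=
        liminf_le_liminf (h.mono fun i hi => by simp only [Pi.add_apply]; linarith)
          (isBoundedUnder_of_eventually_ge hw)
          (isBoundedUnder_le_add hvr_le hu_le).isCoboundedUnder_ge
    _ ≤ limsup (v + r) l + liminf u l :=
        liminf_add_le hvr_ge hvr_le hu_ge hu_le.isCoboundedUnder_ge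
    _ ≤ limsup v l + limsup r l + liminf u l :=
        add_le_add_left (limsup_add_le hv_ge hv_le hr_ge.isCoboundedUnder_le hr_le) _
    _ = liminf u l + limsup v l + C := by rw [hr.limsup_eq]; ring

theorem hLow_le_hLow_add_hUp_of_hBlock_le {x y z : ℕ → Bool} {C : ℝ}
    (h : ∀ ℓ n : ℕ, ℓ ≤ n → hBlock ℓ z n ≤ hBlock ℓ x n + hBlock ℓ y n + C / ℓ) :
    hLow z ≤ hLow x + hUp y := by
  have hmem (ℓ : ℕ) (x : ℕ → Bool) : ∀ᶠ n in atTop, hBlock ℓ x n ∈ Set.Icc 0 1 :=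
    (eventually_ge_atTop ℓ).mono fun _ hℓ => hBlock_mem_Icc hℓ x
  have hinner (ℓ : ℕ) : liminf (hBlock ℓ z) atTop ≤
      liminf (hBlock ℓ x) atTop + limsup (hBlock ℓ y) atTop + C / ℓ :=
    liminf_le_liminf_add_limsup_add (hmem ℓ x) (hmem ℓ y) ((hmem ℓ z).mono fun _ h => h.1)
      tendsto_const_nhds ((eventually_ge_atTop ℓ).mono (h ℓ))
  have houter := liminf_le_liminf_add_limsup_add
    (.of_forall fun ℓ => liminf_mem_Icc (hmem ℓ x)) (.of_forall fun ℓ => limsup_mem_Icc (hmem ℓ y))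
    (.of_forall fun ℓ => (liminf_mem_Icc (hmem ℓ z)).1) (tendsto_const_div_atTop_nhds_zero_nat C)
    (.of_forall hinner)
  rwa [add_zero] at houter

end Limits

theorem hLow_le_hLow_add_hUp_of_mul_val_eq {x y z : ℕ → Bool} {a b c m : ℤ} (hc : c ≠ 0)
    (h : c * val z = a * val x + b * val y + m) : hLow z ≤ hLow x + hUp y := by
  obtain ⟨C, hC⟩ := exists_hBlock_le_add hc h
  exact hLow_le_hLow_add_hUp_of_hBlock_le hC

theorem hLow_add_subadditive_general {x y z : ℕ → Bool} {a b c m : ℤ} (ha : a ≠ 0) (hc : c ≠ 0)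
    (h : c * val z = a * val x + b * val y + m) :
    hLow x - hUp y ≤ hLow z ∧ hLow z ≤ hLow x + hUp y := by
  have hx : a * val x = c * val z + (-b : ℤ) * val y + (-m : ℤ) := by
    push_cast
    linarith
  exact ⟨sub_le_iff_le_add.mpr (hLow_le_hLow_add_hUp_of_mul_val_eq ha hx),
    hLow_le_hLow_add_hUp_of_mul_val_eq hc h⟩

theorem hLow_add_subadditive (x y z : ℕ → Bool)
    (hz : val z = Int.fract (val x + val y)) :
    hLow x - hUp y ≤ hLow z ∧ hLow z ≤ hLow x + hUp y :=
  hLow_add_subadditive_general (a := 1) (b := 1) (c := 1) (m := -⌊val x + val y⌋)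
    one_ne_zero one_ne_zero (by rw [hz, Int.fract]; push_cast; ring)
end
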